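/- arXiv:math/0009163 — 3 statements merged into one kernel-verified Lean document; each statement's English description precedes it below -/
import Mathlib

section
/- Let F be an algebraically closed field and let L ⊆ Mat_n(F) be a linear subspace with dim L ≥ n such that L is not contained in sl_n (i.e., L contains a matrix with nonzero trace). Then there exists an invertible matrix S ∈ GL_n(F) such that π(S L S⁻¹) = Fⁿ, where π : Mat_n(F) → Fⁿ is the projection M ↦ (m₁₁, m₂₂, …, m_nn) onto the diagonal entries. -/
open Matrix

/-!
Conjugating `B` by `1 + E i j` changes its diagonal by `B j i • (eᵢ - eⱼ)`. So if `W` is the space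
of diagonals of `S L S⁻¹` and `eᵢ - eⱼ ∉ W`, then replacing `S` by `(1 + E i j) S` can only shrink
the space of those `A ∈ L` for which `S A S⁻¹` has zero diagonal.

Choose `S` such that this space is minimal. If it is nonzero, pick `A ≠ 0` in it and choose `S`,
among those with the same space, such that the set of nonzero entries of `S A S⁻¹` is maximal. By
minimality, `S A S⁻¹` is block diagonal for the partition `i ∼ j ↔ eᵢ - eⱼ ∈ W`. Were there two
blocks, conjugating by `1 + E i j` with `i ≁ j` would copy a nonzero row `j` to the row `i` without
losing any nonzero entry. Hence `W` contains all the vectors with coordinate sum zero, and the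
matrix of nonzero trace provides the missing direction.
-/

section Transvection

variable {ι R α : Type*} [Fintype ι] [DecidableEq ι] [CommRing R] {i j : ι}

/-- The transvection `1 + c E i j` as an element of `ConjAct`, so that its action on matrices is
conjugation. It is the elementary move by which a conjugation is improved. -/
def transvectionConj (hij : i ≠ j) (c : R) : ConjAct (Matrix ι ι R)ˣ :=
  ConjAct.toConjAct (SpecialLinearGroup.toGL (SpecialLinearGroup.transvection hij c))

theorem transvectionConj_smul (hij : i ≠ j) (c : R) (A : Matrix ι ι R) :
    transvectionConj hij c • A = transvection i j c * A * transvection i j (-c) := by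
  rw [transvectionConj, ConjAct.units_smul_def, ConjAct.ofConjAct_toConjAct, ← map_inv,
    SpecialLinearGroup.transvection_inv]
  rfl

theorem transvectionConj_smul_apply_of_ne (hij : i ≠ j) (c : R) (A : Matrix ι ι R) {a b : ι}
    (ha : a ≠ i) (hb : b ≠ j) : (transvectionConj hij c • A) a b = A a b := by
  rw [transvectionConj_smul, mul_transvection_apply_of_ne _ _ _ _ hb,
    transvection_mul_apply_of_ne _ _ _ _ ha]

theorem transvectionConj_smul_apply_row (hij : i ≠ j) (c : R) (A : Matrix ι ι R) {b : ι}
    (hb : b ≠ j) : (transvectionConj hij c • A) i b = A i b + c * A j b := by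
  rw [transvectionConj_smul, mul_transvection_apply_of_ne _ _ _ _ hb,
    transvection_mul_apply_same]

theorem transvectionConj_smul_apply_col (hij : i ≠ j) (c : R) (A : Matrix ι ι R) {a : ι}
    (ha : a ≠ i) : (transvectionConj hij c • A) a j = A a j - c * A a i := by
  rw [transvectionConj_smul, mul_transvection_apply_same, transvection_mul_apply_of_ne _ _ _ _ ha,
    transvection_mul_apply_of_ne _ _ _ _ ha, neg_mul, sub_eq_add_neg]

theorem diag_transvectionConj_smul (hij : i ≠ j) (c : R) (A : Matrix ι ι R) :
    (transvectionConj hij c • A).diag =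
      A.diag + (c * A j i) • (Pi.single i 1 - Pi.single j 1) := by
  ext a
  by_cases hai : a = i
  · subst hai
    simp [transvectionConj_smul_apply_row, hij]
  by_cases haj : a = j
  · subst haj
    simp [transvectionConj_smul_apply_col, hai, sub_eq_add_neg]
  · simp [transvectionConj_smul_apply_of_ne, hai, haj]

/-- The labelling `q` encodes a partition of the indices for which `A` is block diagonal. -/
theorem support_ssubset_support_transvectionConj_smul [NoZeroDivisors R] {A : Matrix ι ι R}
    {q : ι → α} (hq : ∀ a b, A a b ≠ 0 → q a = q b) (hij : i ≠ j) (hqij : q i ≠ q j)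
    {c : R} (hc : c ≠ 0) {b : ι} (hbj : b ≠ j) (hjb : A j b ≠ 0) :
    Function.support (Function.uncurry A) ⊂
      Function.support (Function.uncurry (transvectionConj hij c • A)) := by
  have row_zero {a : ι} (ha : A j a ≠ 0) : A i a = 0 :=
    by_contra fun h => hqij ((hq i a h).trans (hq j a ha).symm)
  have col_zero {a : ι} (ha : A a j ≠ 0) : A a i = 0 :=
    by_contra fun h => hqij ((hq a i h).symm.trans (hq a j ha))
  refine (Set.ssubset_iff_of_subset ?_).2 ⟨(i, b), ?_, fun h => h (row_zero hjb)⟩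
  · rintro ⟨a, b⟩ (hab : A a b ≠ 0)
    change (transvectionConj hij c • A) a b ≠ 0
    by_cases ha : a = i <;> by_cases hb : b = j
    · exact absurd (ha ▸ hb ▸ hq a b hab) hqij
    · subst ha
      have hjb : A j b = 0 := by_contra fun h => hab (row_zero h)
      rwa [transvectionConj_smul_apply_row hij c A hb, hjb, mul_zero, add_zero]
    · subst hb
      rwa [transvectionConj_smul_apply_col hij c A ha, col_zero hab, mul_zero, sub_zero]
    · rwa [transvectionConj_smul_apply_of_ne hij c A ha hb]
  · change (transvectionConj hij c • A) i b ≠ 0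
    rw [transvectionConj_smul_apply_row hij c A hbj, row_zero hjb, zero_add]
    exact mul_ne_zero hc hjb

end Transvection

section DiagConj

variable {ι R : Type*} [Fintype ι] [DecidableEq ι] [CommRing R]

/-- The diagonal of the conjugate `g • A` as a linear function of `A`: the map `π` of the paper
precomposed with conjugation. The conjugating matrix lives in `ConjAct` so that iterated
conjugations are handled by `mul_smul`. -/
def diagConj (g : ConjAct (Matrix ι ι R)ˣ) : Matrix ι ι R →ₗ[R] ι → R :=
  diagLinearMap ι R R ∘ₗ DistribSMul.toLinearMap R (Matrix ι ι R) g

theorem diagConj_apply (g : ConjAct (Matrix ι ι R)ˣ) (A : Matrix ι ι R) :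
    diagConj g A = (g • A).diag := rfl

theorem sum_diagConj (g : ConjAct (Matrix ι ι R)ˣ) (A : Matrix ι ι R) :
    ∑ i, diagConj g A i = A.trace :=
  trace_units_conj (ConjAct.ofConjAct g) A

theorem diagConj_transvectionConj_mul {i j : ι} (hij : i ≠ j) (c : R)
    (g : ConjAct (Matrix ι ι R)ˣ) (A : Matrix ι ι R) :
    diagConj (transvectionConj hij c * g) A =
      diagConj g A + (c * (g • A) j i) • (Pi.single i 1 - Pi.single j 1) := by
  rw [diagConj_apply, mul_smul, diag_transvectionConj_smul, diagConj_apply]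

/-- The subspace of those matrices in `L` whose conjugate by `g` is hollow, i.e. has zero
diagonal. It is a subspace of `L` and not of the conjugate of `L`, so that the subspaces for
different `g` can be compared by inclusion. -/
def hollowPart (L : Submodule R (Matrix ι ι R)) (g : ConjAct (Matrix ι ι R)ˣ) :
    Submodule R (Matrix ι ι R) :=
  L ⊓ LinearMap.ker (diagConj g)

theorem mem_hollowPart {L : Submodule R (Matrix ι ι R)} {g : ConjAct (Matrix ι ι R)ˣ}
    {A : Matrix ι ι R} : A ∈ hollowPart L g ↔ A ∈ L ∧ diagConj g A = 0 :=
  Iff.rfl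

end DiagConj

section LinearAlgebra

theorem finrank_map_of_disjoint_ker {R V W : Type*} [Ring R] [AddCommGroup V] [Module R V]
    [AddCommGroup W] [Module R W] {f : V →ₗ[R] W} {L : Submodule R V}
    (h : Disjoint L (LinearMap.ker f)) :
    Module.finrank R (L.map f) = Module.finrank R L := by
  rw [← LinearMap.range_domRestrict]
  exact LinearMap.finrank_range_of_inj (LinearMap.injective_domRestrict_iff.2 h)

variable {F : Type*} [DivisionRing F]

theorem add_smul_eq_zero_iff_of_notMem {V : Type*} [AddCommGroup V] [Module F V]
    {W : Submodule F V} {w d : V} (hw : w ∈ W) (hd : d ∉ W) {c : F} :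
    w + c • d = 0 ↔ w = 0 ∧ c = 0 := by
  refine ⟨fun h => ?_, fun ⟨hw0, hc⟩ => by rw [hw0, hc, zero_smul, add_zero]⟩
  have hc : c = 0 := by
    by_contra hc
    exact hd ((W.smul_mem_iff hc).1 (eq_neg_of_add_eq_zero_right h ▸ W.neg_mem hw))
  exact ⟨by simpa [hc] using h, hc⟩

theorem eq_top_of_single_sub_single_mem {ι : Type*} [Fintype ι] [DecidableEq ι]
    {W : Submodule F (ι → F)} (hW : ∀ i j, Pi.single i 1 - Pi.single j 1 ∈ W) {v : ι → F}
    (hv : v ∈ W) (hsum : ∑ i, v i ≠ 0) : W = ⊤ := by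
  have single_mem (j : ι) : Pi.single j 1 ∈ W := by
    have key : (∑ i, v i) • Pi.single j 1 =
        v - ∑ i, v i • (Pi.single i 1 - Pi.single j 1 : ι → F) := by
      simp only [smul_sub, Finset.sum_sub_distrib, ← Finset.sum_smul, ← pi_eq_sum_univ']
      abel
    refine (W.smul_mem_iff hsum).1 (key ▸ W.sub_mem hv ?_)
    exact W.sum_mem fun i _ => W.smul_mem _ (hW i j)
  refine eq_top_iff.2 fun w _ => ?_
  rw [pi_eq_sum_univ' w]
  exact W.sum_mem fun i _ => W.smul_mem _ (single_mem i)

end LinearAlgebra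

section Field

variable {ι F : Type*} [Fintype ι] [DecidableEq ι] [Field F]

section HollowPart

variable {L : Submodule F (Matrix ι ι F)} {g : ConjAct (Matrix ι ι F)ˣ} {i j : ι}

theorem mem_hollowPart_transvectionConj_mul (hij : i ≠ j)
    (hd : Pi.single i 1 - Pi.single j 1 ∉ L.map (diagConj g)) {c : F} (hc : c ≠ 0)
    {A : Matrix ι ι F} :
    A ∈ hollowPart L (transvectionConj hij c * g) ↔ A ∈ hollowPart L g ∧ (g • A) j i = 0 := by
  rw [mem_hollowPart, mem_hollowPart, and_assoc]
  refine and_congr_right fun hA => ?_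
  rw [diagConj_transvectionConj_mul,
    add_smul_eq_zero_iff_of_notMem (Submodule.mem_map_of_mem hA) hd, mul_eq_zero_iff_left hc]

theorem hollowPart_transvectionConj_mul_of_minimalFor
    (hmin : MinimalFor (fun _ => True) (hollowPart L) g) (hij : i ≠ j)
    (hd : Pi.single i 1 - Pi.single j 1 ∉ L.map (diagConj g)) {c : F} (hc : c ≠ 0) :
    hollowPart L (transvectionConj hij c * g) = hollowPart L g :=
  have hle : hollowPart L (transvectionConj hij c * g) ≤ hollowPart L g :=
    fun _ hA => ((mem_hollowPart_transvectionConj_mul hij hd hc).1 hA).1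
  hle.antisymm (hmin.le_of_le trivial hle)

theorem single_sub_single_mem_of_smul_apply_ne_zero
    (hmin : MinimalFor (fun _ => True) (hollowPart L) g) {A : Matrix ι ι F}
    (hA : A ∈ hollowPart L g) (hij : (g • A) i j ≠ 0) :
    Pi.single j 1 - Pi.single i 1 ∈ L.map (diagConj g) := by
  by_contra hd
  have hji : j ≠ i := by
    rintro rfl
    exact hd (by simp)
  rw [← hollowPart_transvectionConj_mul_of_minimalFor hmin hji hd one_ne_zero] at hA
  exact hij ((mem_hollowPart_transvectionConj_mul hji hd one_ne_zero).1 hA).2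

theorem single_sub_single_mem_of_row_ne_zero
    (hmin : MinimalFor (fun _ => True) (hollowPart L) g) {A : Matrix ι ι F}
    (hmax : MaximalFor (fun h => hollowPart L h = hollowPart L g)
      (fun h => Function.support (Function.uncurry (h • A))) g)
    (hA : A ∈ hollowPart L g) {k : ι} (hjk : (g • A) j k ≠ 0) :
    Pi.single i 1 - Pi.single j 1 ∈ L.map (diagConj g) := by
  by_contra hd
  have hij : i ≠ j := by
    rintro rfl
    exact hd (by simp)
  have hkj : k ≠ j := by
    rintro rfl
    exact hjk (congrFun hA.2 k)
  let q (a : ι) := (L.map (diagConj g)).mkQ (Pi.single a 1)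
  have hq (a b : ι) (hab : (g • A) a b ≠ 0) : q a = q b :=
    ((Submodule.Quotient.eq _).2 (single_sub_single_mem_of_smul_apply_ne_zero hmin hA hab)).symm
  have hqij : q i ≠ q j := fun h => hd ((Submodule.Quotient.eq _).1 h)
  have hlt := support_ssubset_support_transvectionConj_smul hq hij hqij one_ne_zero hkj hjk
  rw [← mul_smul] at hlt
  exact hlt.not_subset (hmax.le_of_le
    (hollowPart_transvectionConj_mul_of_minimalFor hmin hij hd one_ne_zero) hlt.subset)

end HollowPart

theorem exists_disjoint_ker_diagConj_or_single_sub_single_mem (L : Submodule F (Matrix ι ι F)) :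
    ∃ g : ConjAct (Matrix ι ι F)ˣ, Disjoint L (LinearMap.ker (diagConj g)) ∨
      ∀ i j, Pi.single i 1 - Pi.single j 1 ∈ L.map (diagConj g) := by
  obtain ⟨g₀, hmin⟩ := exists_minimalFor_of_wellFoundedLT (fun _ => True) (hollowPart L)
    ⟨1, trivial⟩
  by_cases hbot : hollowPart L g₀ = ⊥
  · exact ⟨g₀, Or.inl (disjoint_iff.2 hbot)⟩
  obtain ⟨A, hA, hA_ne⟩ := Submodule.exists_mem_ne_zero_of_ne_bot hbot
  obtain ⟨g, hmax⟩ := exists_maximalFor_of_wellFoundedGT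
    (fun h => hollowPart L h = hollowPart L g₀)
    (fun h => Function.support (Function.uncurry (h • A))) ⟨g₀, rfl⟩
  have hg : hollowPart L g = hollowPart L g₀ := hmax.prop
  replace hmin : MinimalFor (fun _ => True) (hollowPart L) g :=
    ⟨trivial, fun h _ hle => hg ▸ hmin.le_of_le trivial (hg ▸ hle)⟩
  rw [← hg] at hA hmax
  obtain ⟨j, k, hjk⟩ : ∃ j k, (g • A) j k ≠ 0 := by
    by_contra! h
    exact hA_ne ((smul_eq_zero_iff_eq g).1 (Matrix.ext h))
  have hmem (i : ι) := single_sub_single_mem_of_row_ne_zero (i := i) hmin hmax hA hjk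
  exact ⟨g, Or.inr fun i l => by simpa using Submodule.sub_mem _ (hmem i) (hmem l)⟩

theorem exists_map_diagConj_eq_top (L : Submodule F (Matrix ι ι F))
    (hdim : Fintype.card ι ≤ Module.finrank F L) (htr : ∃ A ∈ L, A.trace ≠ 0) :
    ∃ g : ConjAct (Matrix ι ι F)ˣ, L.map (diagConj g) = ⊤ := by
  obtain ⟨g, hg | hg⟩ := exists_disjoint_ker_diagConj_or_single_sub_single_mem L
  · refine ⟨g, Submodule.eq_top_of_finrank_eq (le_antisymm (Submodule.finrank_le _) ?_)⟩
    rwa [Module.finrank_fintype_fun_eq_card, finrank_map_of_disjoint_ker hg]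
  · obtain ⟨B, hBL, hB⟩ := htr
    refine ⟨g, eq_top_of_single_sub_single_mem hg (Submodule.mem_map_of_mem hBL) ?_⟩
    rwa [sum_diagConj]

theorem exists_conjugation_diagonal_surjective_general (L : Submodule F (Matrix ι ι F))
    (hdim : Fintype.card ι ≤ Module.finrank F L) (htr : ∃ A ∈ L, A.trace ≠ 0) :
    ∃ S : (Matrix ι ι F)ˣ, ∀ v : ι → F, ∃ A ∈ L,
      (S.val * A * S⁻¹.val).diag = v := by
  obtain ⟨g, hg⟩ := exists_map_diagConj_eq_top L hdim htr
  exact ⟨ConjAct.ofConjAct g, fun v => Submodule.mem_map.1 (hg ▸ Submodule.mem_top)⟩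

end Field

/-- Let `F` be an algebraically closed field and `L ⊆ Mat_n(F)` a linear subspace with
`dim L ≥ n` that is not contained in `sl_n` (i.e. `L` contains a matrix of nonzero trace).
Then there is an invertible matrix `S` such that the projection onto the diagonal maps
`S L S⁻¹` onto all of `Fⁿ`. -/
theorem exists_conjugation_diagonal_surjective {F : Type*} [Field F] [IsAlgClosed F]
    {n : ℕ} (L : Submodule F (Matrix (Fin n) (Fin n) F))
    (hdim : n ≤ Module.finrank F L)
    (htr : ∃ A ∈ L, A.trace ≠ 0) :
    ∃ S : (Matrix (Fin n) (Fin n) F)ˣ,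
      ∀ v : Fin n → F, ∃ A ∈ L,
        (fun i : Fin n => ((S : Matrix (Fin n) (Fin n) F) * A *
          ((S⁻¹ : (Matrix (Fin n) (Fin n) F)ˣ) : Matrix (Fin n) (Fin n) F)) i i) = v :=
  exists_conjugation_diagonal_surjective_general L (by simpa using hdim) htr
end

section
/- Let F be a field and M an n×n matrix over F. Then all principal minors of M (including det M and the empty minor 1) are nonzero if and only if for all diagonal n×n matrices Z₁ and Z₂ such that for each index i the pair ((Z₁)_{ii}, (Z₂)_{ii}) ≠ (0,0), the determinant of the 2n×2n block matrix [[Z₁, Z₂],[M, λI]] is not the zero polynomial in λ. (Equivalently: M is 𝒟-nondegenerate for the set 𝒟 of diagonal matrices, whose closure in Grass(n,2n) consists exactly of the subspaces rowsp[Z₁ Z₂] with Z₁, Z₂ diagonal and ((Z₁)_{ii},(Z₂)_{ii}) ≠ (0,0) for every i.) -/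
open Matrix Polynomial

/-!
The determinant of `[[Z₁, Z₂], [M, λ I]]` equals `det (λ Z₁ - Z₂ M)`. This is multilinear in the
rows, so for `Z₁ = diag a` and `Z₂ = diag b` it expands as the sum over `s ⊆ {1, …, n}` of
`λ ^ (n - |s|) * ∏_{i ∉ s} a i * ∏_{i ∈ s} (-b i) * det M_s`.

Let `I` be the support of `b`. Only the terms with `s ⊆ I` survive, hence the coefficient of
`λ ^ (n - |I|)` is the term `s = I`, which is nonzero when `det M_I` is nonzero and `a`, `b` have
no common zero. Conversely, for the indicator `b` of `I` and the indicator `a` of its complement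
the whole sum is the term `s = I`, which is zero when `det M_I = 0`.
-/

section

variable {m R : Type*} [Fintype m] [DecidableEq m] [CommRing R]

theorem det_fromBlocks_mul_det_of_commute (A B : Matrix m m R) {C D : Matrix m m R}
    (h : Commute C D) :
    (fromBlocks A B C D).det * D.det = (A * D - B * C).det * D.det := by
  have hmul : fromBlocks A B C D * fromBlocks D 0 (-C) 1 = fromBlocks (A * D - B * C) B 0 D := by
    simp [fromBlocks_multiply, h.eq, sub_eq_add_neg]
  simpa using congrArg det hmul

theorem det_fromBlocks_of_commute (A B : Matrix m m R) {C D : Matrix m m R} (h : Commute C D) :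
    (fromBlocks A B C D).det = (A * D - B * C).det := by
  -- `D.det` may be a zero divisor, but the determinant of `X • 1 + D` is monic: cancel it over
  -- `R[X]`, then set `X = 0`.
  let D' : Matrix m m R[X] := charmatrix (-D)
  let ι : Matrix m m R →+* Matrix m m R[X] := (Polynomial.C : R →+* R[X]).mapMatrix
  let ev : R[X] →+* R := evalRingHom 0
  have hev (N : Matrix m m R) : ev.mapMatrix (ι N) = N := by ext; simp [ev, ι]
  have hev_D' : ev.mapMatrix D' = D := by
    ext i j
    obtain rfl | hij := eq_or_ne i j <;> simp [ev, D', *]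
  have hcomm : Commute (ι C) D' :=
    (scalar_commute X (Commute.all X) (ι C)).symm.sub_right (h.neg_right.map ι)
  have hdet : (fromBlocks (ι A) (ι B) (ι C) D').det = (ι A * D' - ι B * ι C).det :=
    (charpoly_monic (-D)).isRegular.right (det_fromBlocks_mul_det_of_commute (ι A) (ι B) hcomm)
  have hblocks : ev.mapMatrix (fromBlocks (ι A) (ι B) (ι C) D') = fromBlocks A B C D := by
    simp only [RingHom.mapMatrix_apply, fromBlocks_map] at hev hev_D' ⊢
    rw [hev, hev, hev, hev_D']
  simpa only [RingHom.map_det, hblocks, map_sub, map_mul, hev, hev_D'] using congrArg ev hdet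

/-- The principal minor of `M` on the index set `I`, with rows and columns indexed by the subtype
`I`, so that no order on the indices is needed. -/
def principalMinor {m R : Type*} [DecidableEq m] [CommRing R] (M : Matrix m m R)
    (I : Finset m) : R :=
  (M.submatrix ((↑) : I → m) (↑)).det

theorem principalMinor_map {m R S : Type*} [DecidableEq m] [CommRing R] [CommRing S] (f : R →+* S)
    (M : Matrix m m R) (I : Finset m) : principalMinor (M.map f) I = f (principalMinor M I) :=
  (RingHom.map_det f _).symm

theorem det_submatrix_orderEmbOfFin {m R : Type*} [LinearOrder m] [CommRing R]
    (M : Matrix m m R) (I : Finset m) :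
    (M.submatrix (I.orderEmbOfFin rfl) (I.orderEmbOfFin rfl)).det = principalMinor M I :=
  det_submatrix_equiv_self (I.orderIsoOfFin rfl).toEquiv (M.submatrix ((↑) : I → m) (↑))

theorem det_diagonal_mul_add_diagonal (a b : m → R) (M : Matrix m m R) :
    (diagonal a * M + diagonal b).det =
      ∑ s : Finset m, (∏ i ∈ s, a i) * (∏ i ∈ sᶜ, b i) * principalMinor M s := by
  have hrows (s : Finset m) :
      of (s.piecewise (diagonal a * M).row (diagonal b).row) =
        diagonal (s.piecewise a b) * of (s.piecewise M.row (1 : Matrix m m R).row) := by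
    ext i j
    by_cases hi : i ∈ s <;> simp [hi, diagonal_apply, one_apply]
  calc (diagonal a * M + diagonal b).det
      = ∑ s : Finset m, (of (s.piecewise (diagonal a * M).row (diagonal b).row)).det :=
        detRowAlternating.map_add_univ _ _
    _ = ∑ s : Finset m, (∏ i ∈ s, a i) * (∏ i ∈ sᶜ, b i) * principalMinor M s := by
      simp_rw [hrows, det_mul, det_diagonal, det_piecewise_one_eq_submatrix_det, principalMinor,
        Finset.prod_piecewise, Finset.univ_inter, Finset.compl_eq_univ_sdiff]

theorem det_fromBlocks_diagonal_smul_one (a b : m → R) (M : Matrix m m R) (r : R) :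
    (fromBlocks (diagonal a) (diagonal b) M (r • 1)).det =
      ∑ s : Finset m, (∏ i ∈ s, -b i) * (∏ i ∈ sᶜ, r * a i) * principalMinor M s := by
  have hpencil : diagonal a * (r • 1) - diagonal b * M =
      diagonal (fun i => -b i) * M + diagonal fun i => r * a i := by
    ext i j
    simp [diagonal_apply, sub_eq_neg_add]
  rw [det_fromBlocks_of_commute _ _ ((Commute.one_right M).smul_right r), hpencil,
    det_diagonal_mul_add_diagonal]

/-- The block matrix `[[Z₁, Z₂], [M, λ I]]` over `R[λ]` for `Z₁ = diag a` and `Z₂ = diag b`, whose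
determinant is tested in the nondegeneracy of `M` with respect to the diagonal matrices. The
indeterminate `λ` is `Polynomial.X`. -/
noncomputable def diagonalPencil (a b : m → R) (M : Matrix m m R) : Matrix (m ⊕ m) (m ⊕ m) R[X] :=
  fromBlocks ((diagonal a).map C) ((diagonal b).map C) (M.map C) ((X : R[X]) • 1)

theorem det_diagonalPencil (a b : m → R) (M : Matrix m m R) :
    (diagonalPencil a b M).det =
      ∑ s : Finset m, monomial sᶜ.card
        ((∏ i ∈ s, -b i) * (∏ i ∈ sᶜ, a i) * principalMinor M s) := by
  simp_rw [diagonalPencil, diagonal_map C_0, det_fromBlocks_diagonal_smul_one,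
    principalMinor_map, ← C_mul_X_pow_eq_monomial, Finset.prod_mul_distrib, Finset.prod_const,
    C_mul, map_prod, C_neg]
  refine Finset.sum_congr rfl fun s _ => ?_
  ring

theorem prod_eq_zero_of_not_subset {ι M₀ : Type*} [CommMonoidWithZero M₀] {f : ι → M₀}
    {s t : Finset ι} (hf : ∀ i ∉ t, f i = 0) (hst : ¬s ⊆ t) : ∏ i ∈ s, f i = 0 :=
  let ⟨_, his, hit⟩ := Finset.not_subset.1 hst
  Finset.prod_eq_zero his (hf _ hit)

theorem coeff_det_diagonalPencil {a b : m → R} {I : Finset m} (hb : ∀ i ∉ I, b i = 0)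
    (M : Matrix m m R) :
    (diagonalPencil a b M).det.coeff Iᶜ.card =
      (∏ i ∈ I, -b i) * (∏ i ∈ Iᶜ, a i) * principalMinor M I := by
  rw [det_diagonalPencil, finsetSum_coeff, Finset.sum_eq_single I, coeff_monomial_same]
  · intro s _ hs
    by_cases hsI : s ⊆ I
    · have hcard : sᶜ.card ≠ Iᶜ.card := fun h =>
        hs (compl_injective
          (Finset.eq_of_subset_of_card_le (Finset.compl_subset_compl.2 hsI) h.le).symm)
      exact coeff_monomial_of_ne _ hcard.symm
    · have hprod : ∏ i ∈ s, -b i = 0 :=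
        prod_eq_zero_of_not_subset (fun i hi => neg_eq_zero.2 (hb i hi)) hsI
      simp [hprod]
  · simp

theorem det_diagonalPencil_eq_monomial {a b : m → R} {I : Finset m} (ha : ∀ i ∈ I, a i = 0)
    (hb : ∀ i ∉ I, b i = 0) (M : Matrix m m R) :
    (diagonalPencil a b M).det = monomial Iᶜ.card
      ((∏ i ∈ I, -b i) * (∏ i ∈ Iᶜ, a i) * principalMinor M I) := by
  rw [det_diagonalPencil, Finset.sum_eq_single I]
  · intro s _ hs
    by_cases hsI : s ⊆ I
    · obtain ⟨i, hiI, his⟩ := Finset.exists_of_ssubset (hsI.ssubset_of_ne hs)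
      simp [Finset.prod_eq_zero (Finset.mem_compl.2 his) (ha i hiI)]
    · have hprod : ∏ i ∈ s, -b i = 0 :=
        prod_eq_zero_of_not_subset (fun i hi => neg_eq_zero.2 (hb i hi)) hsI
      simp [hprod]
  · simp

end

theorem principal_minors_ne_zero_iff_nondegenerate_general {m R : Type*} [Fintype m]
    [DecidableEq m] [CommRing R] [IsDomain R] (M : Matrix m m R) :
    (∀ I : Finset m, principalMinor M I ≠ 0) ↔
      ∀ a b : m → R, (∀ i, ¬(a i = 0 ∧ b i = 0)) → (diagonalPencil a b M).det ≠ 0 := by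
  classical
  constructor
  · intro hM a b hab hdet
    let I : Finset m := {i | b i ≠ 0}
    have hb : ∀ i ∉ I, b i = 0 := by simp [I]
    have hcoeff := coeff_det_diagonalPencil (a := a) hb M
    rw [hdet, coeff_zero] at hcoeff
    refine mul_ne_zero (mul_ne_zero ?_ ?_) (hM I) hcoeff.symm <;> rw [Finset.prod_ne_zero_iff]
    · exact fun i hi => neg_ne_zero.2 (by simpa [I] using hi)
    · exact fun i hi hai => hab i ⟨hai, hb i (Finset.mem_compl.1 hi)⟩
  · intro hD I hI
    refine hD (fun i => if i ∈ I then 0 else 1) (fun i => if i ∈ I then 1 else 0) (fun i => ?_) ?_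
    · by_cases hi : i ∈ I <;> simp [hi]
    · rw [det_diagonalPencil_eq_monomial (I := I) (by simp +contextual) (by simp +contextual), hI,
        mul_zero, map_zero]

/-- Let `M` be an `n × n` matrix over a field `F`. All principal minors of `M` are nonzero
if and only if for all diagonal matrices `Z₁ = diagonal d₁` and `Z₂ = diagonal d₂` such
that `(d₁ i, d₂ i) ≠ (0, 0)` for every `i`, the determinant of the `2n × 2n` block matrix
`[[Z₁, Z₂], [M, λ I]]` is not the zero polynomial in `λ`.  (This says exactly that `M` is
`𝒟`-nondegenerate for the set `𝒟` of diagonal matrices.) -/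
theorem principal_minors_ne_zero_iff_nondegenerate {F : Type*} [Field F] {n : ℕ}
    (M : Matrix (Fin n) (Fin n) F) :
    (∀ I : Finset (Fin n),
        (M.submatrix (I.orderEmbOfFin rfl) (I.orderEmbOfFin rfl)).det ≠ 0) ↔
      ∀ d₁ d₂ : Fin n → F, (∀ i, ¬(d₁ i = 0 ∧ d₂ i = 0)) →
        (Matrix.fromBlocks
            ((Matrix.diagonal d₁).map Polynomial.C)
            ((Matrix.diagonal d₂).map Polynomial.C)
            (M.map Polynomial.C)
            ((Polynomial.X : Polynomial F) • 1)).det ≠ 0 := by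
  simp_rw [det_submatrix_orderEmbOfFin]
  exact principal_minors_ne_zero_iff_nondegenerate_general M
end

section
/- (Friedland's theorem over an algebraically closed field) Let F be an algebraically closed field and let M be an n×n matrix over F all of whose principal minors are nonzero. Then for every monic polynomial p(λ) of degree n over F there exists a diagonal matrix Z over F such that det(λI − MZ) = p(λ). -/
open Matrix

/-!
Let `c I` be the principal minor of `M` on `I`. Up to sign, the coefficient of `λ ^ (n - k)` in
`det (λ I - M Z)`, where `Z = diag(x)`, is `∑_{|I| = k} c I ∏_{i ∈ I} x i`, a form of degree `k` in
`x`. If these forms all vanish at `x`, then so does the one with `k` the size of the support `I` of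
`x`, but its value is the single term `c I ∏_{i ∈ I} x i ≠ 0` unless `x = 0`. By the
Nullstellensatz, `n` forms of positive degree in `n` variables whose only common zero is the origin
generate an ideal containing all monomials of large degree, so by graded Nakayama the polynomial
ring is finite over the subalgebra they generate. The forms are then algebraically independent, and
lying over shows that they define a surjective self-map of affine space.
-/

section GradedNakayama

variable {R A σ : Type*} [CommSemiring R] [CommSemiring A] [Algebra R A] (𝒜 : ℕ → Submodule R A)
  [GradedAlgebra 𝒜] {f : σ → A} {d : σ → ℕ}

theorem eq_top_of_forall_homogeneous_mem_or_mem_span (hf : ∀ s, f s ∈ 𝒜 (d s))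
    (hd : ∀ s, 0 < d s) (T : Submodule (Algebra.adjoin R (Set.range f)) A)
    (hT : ∀ k, ∀ a ∈ 𝒜 k, a ∈ T ∨ a ∈ Ideal.span (Set.range f)) : T = ⊤ := by
  classical
  have homogeneous_mem (k : ℕ) : ∀ a ∈ 𝒜 k, a ∈ T := by
    induction k using Nat.strong_induction_on with
    | _ k ih =>
      intro a ha
      refine (hT k a ha).elim id fun ha_span ↦ ?_
      obtain ⟨b, rfl⟩ := Finsupp.mem_span_range_iff_exists_finsupp.1 ha_span
      rw [← DirectSum.decompose_of_mem_same 𝒜 ha, Finsupp.sum, DirectSum.decompose_sum,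
        DFinsupp.finsetSum_apply, AddSubmonoidClass.coe_finsetSum]
      refine T.sum_mem fun s _ ↦ ?_
      rw [smul_eq_mul, DirectSum.coe_decompose_mul_of_right_mem 𝒜 k (hf s)]
      split_ifs with hsk
      · rw [mul_comm]
        exact T.smul_mem ⟨f s, Algebra.subset_adjoin ⟨s, rfl⟩⟩
          (ih (k - d s) (Nat.sub_lt ((hd s).trans_le hsk) (hd s)) _ (SetLike.coe_mem _))
      · exact T.zero_mem
  refine eq_top_iff.2 fun a _ ↦ ?_
  rw [← DirectSum.sum_support_decompose 𝒜 a]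
  exact T.sum_mem fun k _ ↦ homogeneous_mem k _ (SetLike.coe_mem _)

end GradedNakayama

section PolynomialMaps

open MvPolynomial

variable {ι σ : Type*} [Finite ι]

attribute [local instance] MvPolynomial.gradedAlgebra in
theorem finite_adjoin_range_of_isHomogeneous {R : Type*} [CommSemiring R]
    {f : σ → MvPolynomial ι R} {d : σ → ℕ} (hf : ∀ s, (f s).IsHomogeneous (d s))
    (hd : ∀ s, 0 < d s) (hX : idealOfVars ι R ≤ (Ideal.span (Set.range f)).radical) :
    Module.Finite (Algebra.adjoin R (Set.range f)) (MvPolynomial ι R) := by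
  obtain ⟨D, hD⟩ := Ideal.exists_pow_le_of_le_radical_of_fg hX (idealOfVars_fg ι R)
  set monomials : Set (MvPolynomial ι R) := (monomial · 1) '' {m | m.degree ≤ D}
  refine ⟨Submodule.fg_def.2 ⟨monomials, (Finsupp.finite_of_degree_le D).image _, ?_⟩⟩
  refine eq_top_of_forall_homogeneous_mem_or_mem_span (homogeneousSubmodule ι R) hf hd _
    fun k p hp ↦ ?_
  have degree_eq {m : ι →₀ ℕ} (hm : m ∈ p.support) : m.degree = k := by
    rw [Finsupp.degree_eq_weight_one]
    exact hp (mem_support_iff.1 hm)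
  refine (le_total k D).imp (fun hkD ↦ ?_) fun hDk ↦ ?_
  · rw [p.as_sum]
    refine Submodule.sum_mem _ fun m hm ↦ ?_
    rw [← mul_one (p.coeff m), ← smul_eq_mul, ← smul_monomial]
    exact Submodule.smul_of_tower_mem _ _
      (Submodule.subset_span ⟨m, (degree_eq hm).trans_le hkD, rfl⟩)
  · exact hD ((mem_pow_idealOfVars_iff D p).2 fun m hm ↦ hDk.trans_eq (degree_eq hm).symm)

variable {F : Type*} [Field F] [IsAlgClosed F]

theorem idealOfVars_le_radical_of_forall_zero {I : Ideal (MvPolynomial ι F)}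
    (hI : ∀ x : ι → F, (∀ p ∈ I, eval x p = 0) → x = 0) : idealOfVars ι F ≤ I.radical := by
  rw [← vanishingIdeal_zeroLocus_eq_radical (K := F), Ideal.span_le]
  rintro _ ⟨i, rfl⟩ x hx
  simp [hI x hx]

theorem exists_eval_eq_of_isIntegral_adjoin_range [Finite σ] (hσ : Nat.card σ ≤ Nat.card ι)
    (f : σ → MvPolynomial ι F)
    [hf : Algebra.IsIntegral (Algebra.adjoin F (Set.range f)) (MvPolynomial ι F)] (c : σ → F) :
    ∃ x : ι → F, ∀ s, eval x (f s) = c s := by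
  have aeval_injective : Function.Injective (aeval (R := F) f) :=
    (Algebra.IsAlgebraic.isTranscendenceBasis_of_lift_le_trdeg_of_finite F f (by
      simpa [← Nat.cast_card] using hσ)).1
  have aeval_isIntegral : (aeval (R := F) f).toRingHom.IsIntegral := by
    rw [Algebra.adjoin_range_eq_range_aeval] at hf
    exact (RingHom.isIntegral_of_surjective _ (AlgHom.rangeRestrict_surjective _)).trans
      (aeval (R := F) f).rangeRestrict.toRingHom _ (algebraMap_isIntegral_iff.2 hf)
  have map_ne_top : (vanishingIdeal F {c}).map (aeval (R := F) f).toRingHom ≠ ⊤ := by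
    rw [Ne, Ideal.map_eq_top_iff _ aeval_injective aeval_isIntegral]
    exact Ideal.IsPrime.ne_top'
  obtain ⟨Q, hQ, map_le⟩ := Ideal.exists_le_maximal _ map_ne_top
  obtain ⟨x, rfl⟩ := eq_vanishingIdeal_singleton_of_isMaximal F hQ
  refine ⟨x, fun s ↦ ?_⟩
  have X_sub_C_mem : X s - C (c s) ∈ vanishingIdeal F {c} := by simp
  simpa [sub_eq_zero, aeval_eq_eval] using map_le (Ideal.mem_map_of_mem _ X_sub_C_mem)

theorem exists_eval_eq_of_isHomogeneous [Finite σ] (hσ : Nat.card σ ≤ Nat.card ι)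
    {f : σ → MvPolynomial ι F} {d : σ → ℕ} (hf : ∀ s, (f s).IsHomogeneous (d s))
    (hd : ∀ s, 0 < d s) (hzero : ∀ x : ι → F, (∀ s, eval x (f s) = 0) → x = 0) (c : σ → F) :
    ∃ x : ι → F, ∀ s, eval x (f s) = c s := by
  have := finite_adjoin_range_of_isHomogeneous hf hd <| idealOfVars_le_radical_of_forall_zero
    fun x hx ↦ hzero x fun s ↦ hx (f s) (Ideal.subset_span ⟨s, rfl⟩)
  exact exists_eval_eq_of_isIntegral_adjoin_range hσ f c

end PolynomialMaps

section WeightedEsymm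

open MvPolynomial

variable {ι R : Type*} [Fintype ι] [CommSemiring R]

/-- The elementary symmetric polynomial of degree `k` with the squarefree monomial on each index
set `I` weighted by `c I`. -/
noncomputable def weightedEsymm (c : Finset ι → R) (k : ℕ) : MvPolynomial ι R :=
  ∑ I ∈ Finset.univ.powersetCard k, C (c I) * ∏ i ∈ I, X i

theorem eval_weightedEsymm (c : Finset ι → R) (k : ℕ) (x : ι → R) :
    eval x (weightedEsymm c k) = ∑ I ∈ Finset.univ.powersetCard k, c I * ∏ i ∈ I, x i := by
  simp [weightedEsymm]

theorem weightedEsymm_isHomogeneous (c : Finset ι → R) (k : ℕ) :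
    (weightedEsymm c k).IsHomogeneous k := by
  refine IsHomogeneous.sum _ _ _ fun I hI ↦ IsHomogeneous.C_mul ?_ _
  simpa [(Finset.mem_powersetCard.1 hI).2] using
    IsHomogeneous.prod I (fun i ↦ (X i : MvPolynomial ι R)) (fun _ ↦ 1)
      fun i _ ↦ isHomogeneous_X R i

theorem eval_weightedEsymm_card_support [DecidableEq R] (c : Finset ι → R) (x : ι → R) :
    eval x (weightedEsymm c (Finset.univ.filter (x · ≠ 0)).card) =
      c (Finset.univ.filter (x · ≠ 0)) * ∏ i with x i ≠ 0, x i := by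
  rw [eval_weightedEsymm]
  refine Finset.sum_eq_single_of_mem _ (by simp [Finset.mem_powersetCard]) fun I hI hne ↦ ?_
  obtain ⟨i, hiI, hi⟩ : ∃ i ∈ I, i ∉ Finset.univ.filter (x · ≠ 0) := by
    by_contra! hsub
    exact hne (Finset.eq_of_subset_of_card_le hsub (Finset.mem_powersetCard.1 hI).2.ge)
  rw [Finset.prod_eq_zero hiI (by simpa using hi), mul_zero]

theorem eq_zero_of_eval_weightedEsymm_eq_zero [NoZeroDivisors R] {c : Finset ι → R}
    (hc : ∀ I, I.Nonempty → c I ≠ 0) {x : ι → R}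
    (hx : ∀ k ∈ Finset.Icc 1 (Fintype.card ι), eval x (weightedEsymm c k) = 0) : x = 0 := by
  classical
  nontriviality R
  set I := Finset.univ.filter (x · ≠ 0)
  by_contra! hne
  have I_nonempty : I.Nonempty := by simpa [I, Finset.filter_nonempty_iff, funext_iff] using hne
  have eval_eq_zero := hx I.card (Finset.mem_Icc.2 ⟨I_nonempty.card_pos, I.card_le_univ⟩)
  rw [eval_weightedEsymm_card_support] at eval_eq_zero
  exact mul_ne_zero (hc I I_nonempty)
    (Finset.prod_ne_zero_iff.2 fun i hi ↦ (Finset.mem_filter.1 hi).2) eval_eq_zero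

theorem exists_eval_weightedEsymm_eq {F : Type*} [Field F] [IsAlgClosed F] {c : Finset ι → F}
    (hc : ∀ I, I.Nonempty → c I ≠ 0) (a : ℕ → F) :
    ∃ x : ι → F, ∀ k ∈ Finset.Icc 1 (Fintype.card ι), eval x (weightedEsymm c k) = a k := by
  obtain ⟨x, hx⟩ := exists_eval_eq_of_isHomogeneous (σ := Finset.Icc 1 (Fintype.card ι))
    (by simp [-Finset.mem_Icc]) (fun k ↦ weightedEsymm_isHomogeneous c k)
    (fun k ↦ (Finset.mem_Icc.1 k.2).1)
    (fun x hx ↦ eq_zero_of_eval_weightedEsymm_eq_zero hc fun k hk ↦ hx ⟨k, hk⟩) (fun k ↦ a k)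
  exact ⟨x, fun k hk ↦ hx ⟨k, hk⟩⟩

end WeightedEsymm

theorem eq_of_monic_of_coeff_eq {R : Type*} [Semiring R] {p q : Polynomial R} (hp : p.Monic)
    (hq : q.Monic) (natDegree_eq : p.natDegree = q.natDegree)
    (coeff_eq : ∀ k < p.natDegree, p.coeff k = q.coeff k) : p = q := by
  rw [hp.as_sum, hq.as_sum, ← natDegree_eq]
  exact congrArg _ (Finset.sum_congr rfl fun k hk ↦ by rw [coeff_eq k (Finset.mem_range.1 hk)])

theorem charpoly_mul_diagonal_coeff {ι R : Type*} [Fintype ι] [DecidableEq ι] [CommRing R]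
    (M : Matrix ι ι R) (x : ι → R) {k : ℕ} (hk : k ≤ Fintype.card ι) :
    (M * diagonal x).charpoly.coeff (Fintype.card ι - k) = (-1) ^ k * MvPolynomial.eval x
      (weightedEsymm (fun I ↦ (M.submatrix ((↑) : I → ι) (↑)).det) k) := by
  rw [charpoly_coeff_eq_sum_minors _ k hk, eval_weightedEsymm]
  congr! 2 with I
  have submatrix_eq : (M * diagonal x).submatrix ((↑) : I → ι) (↑) =
      M.submatrix (↑) (↑) * diagonal (fun i : I ↦ x i) := by
    ext i j
    simp
  rw [submatrix_eq, det_mul, det_diagonal, Finset.prod_coe_sort I x]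

theorem multiplicative_inverse_eigenvalue_diagonal_general {F ι : Type*} [Field F] [IsAlgClosed F]
    [Fintype ι] [DecidableEq ι] (M : Matrix ι ι F)
    (hM : ∀ I : Finset ι, (M.submatrix ((↑) : I → ι) (↑)).det ≠ 0)
    (p : Polynomial F) (hp : p.Monic) (hdeg : p.natDegree = Fintype.card ι) :
    ∃ d : ι → F, (M * diagonal d).charpoly = p := by
  obtain ⟨d, hd⟩ := exists_eval_weightedEsymm_eq (fun I _ ↦ hM I)
    fun k ↦ (-1) ^ k * p.coeff (Fintype.card ι - k)
  have natDegree_eq := (M * diagonal d).charpoly_natDegree_eq_dim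
  refine ⟨d, eq_of_monic_of_coeff_eq (charpoly_monic _) hp (natDegree_eq.trans hdeg.symm)
    fun j hj ↦ ?_⟩
  rw [natDegree_eq] at hj
  have coeff_eq := charpoly_mul_diagonal_coeff M d (Nat.sub_le _ j)
  rwa [hd _ (Finset.mem_Icc.2 ⟨Nat.sub_pos_of_lt hj, Nat.sub_le _ j⟩), ← mul_assoc, ← mul_pow,
    neg_one_mul, neg_neg, one_pow, one_mul, Nat.sub_sub_self hj.le] at coeff_eq

/-- (Friedland's theorem over an algebraically closed field.)
Let `F` be an algebraically closed field and `M` an `n × n` matrix over `F` all of whose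
principal minors are nonzero.  Then for every monic polynomial `p` of degree `n` over `F`
there is a diagonal matrix `Z` with `det (λ I - M Z) = p(λ)`. -/
theorem multiplicative_inverse_eigenvalue_diagonal {F : Type*} [Field F] [IsAlgClosed F]
    {n : ℕ} (M : Matrix (Fin n) (Fin n) F)
    (hM : ∀ I : Finset (Fin n),
      (M.submatrix (I.orderEmbOfFin rfl) (I.orderEmbOfFin rfl)).det ≠ 0) :
    ∀ p : Polynomial F, p.Monic → p.natDegree = n →
      ∃ d : Fin n → F, (M * Matrix.diagonal d).charpoly = p := by
  intro p hp hdeg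
  refine multiplicative_inverse_eigenvalue_diagonal_general M (fun I ↦ ?_) p hp
    (by simpa using hdeg)
  rw [← det_submatrix_equiv_self (I.orderIsoOfFin rfl).toEquiv]
  exact hM I
end
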